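/- arXiv:2506.16162 — 2 statements merged into one kernel-verified Lean document; each statement's English description precedes it below -/
import Mathlib

section
/- Let r > 0, λ > 0, ρ > 0, β > 0, α ∈ ℝ, η ∈ ℝ, τ > -1, and let n ≥ 1 be an integer. Define s = √(r²/4 + n²λ²ρ/((1+τ)β)), u₂ = (r/2 − s)/λ², v₂ = (r/2 − s)·(1+τ)β/(nλ²), B = nα/β, D = nλ²v₂/((1+τ)β) − (λ²u₂ − r), u₁ = (n/((1+τ)β))·((λB·v₂ − nη)/D) / (1 − (nλ²v₂/((1+τ)β))/D), and v₁ = ((λ²u₁ + λB)·v₂ − nη)/D. Then D = r and v₁ = (α(1+τ)(r/2 − s) − nηλ) / (λ·(r/2 + s)). -/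
/-- Exact closed-form simplification of the linear coefficient `v₁` of the
post-tipping cooperative value function in the homogeneous grand-coalition case:
`D = r` and `v₁ = (α(1+τ)(r/2 − s) − nηλ)/(λ(r/2 + s))`. -/
theorem stmt_13 (r lam ρ β α η τ : ℝ) (n : ℕ) (hr : 0 < r) (hlam : 0 < lam)
    (hρ : 0 < ρ) (hβ : 0 < β) (hτ : -1 < τ) (hn : 1 ≤ n) :
    let s : ℝ := Real.sqrt (r ^ 2 / 4 + (n : ℝ) ^ 2 * lam ^ 2 * ρ / ((1 + τ) * β))
    let u2 : ℝ := (r / 2 - s) / lam ^ 2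
    let v2 : ℝ := (r / 2 - s) * (1 + τ) * β / ((n : ℝ) * lam ^ 2)
    let B : ℝ := (n : ℝ) * α / β
    let D : ℝ := (n : ℝ) * lam ^ 2 * v2 / ((1 + τ) * β) - (lam ^ 2 * u2 - r)
    let u1 : ℝ := ((n : ℝ) / ((1 + τ) * β)) * ((lam * B * v2 - (n : ℝ) * η) / D)
      / (1 - ((n : ℝ) * lam ^ 2 * v2 / ((1 + τ) * β)) / D)
    let v1 : ℝ := ((lam ^ 2 * u1 + lam * B) * v2 - (n : ℝ) * η) / D
    D = r ∧
      v1 = (α * (1 + τ) * (r / 2 - s) - (n : ℝ) * η * lam) / (lam * (r / 2 + s)) := by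
  intro s u2 v2 B D u1 v1
  have hs : 0 ≤ s := Real.sqrt_nonneg _
  have hk : (1 + τ) ≠ 0 := by linarith
  have hn0 : (n : ℝ) ≠ 0 := by
    have : (1 : ℝ) ≤ n := by exact_mod_cast hn
    linarith
  have hl : lam ≠ 0 := hlam.ne'
  have hb : β ≠ 0 := hβ.ne'
  have hr0 : r ≠ 0 := hr.ne'
  have hp : r / 2 + s ≠ 0 := by linarith
  clear_value s
  have hx : (n : ℝ) * lam ^ 2 * v2 / ((1 + τ) * β) = r / 2 - s := by
    simp only [v2]
    field_simp
  have hu : lam ^ 2 * u2 = r / 2 - s := by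
    simp only [u2]
    field_simp
  have hD : D = r := by
    simp only [D]
    rw [hx, hu]
    ring
  refine ⟨hD, ?_⟩
  have hE : lam * B * v2 - (n : ℝ) * η
      = (α * (1 + τ) * (r / 2 - s) - (n : ℝ) * η * lam) / lam := by
    simp only [B, v2]
    field_simp
  have h1 : 1 - (r / 2 - s) / r = (r / 2 + s) / r := by
    field_simp
    ring
  have hu1 : u1 = ((n : ℝ) / ((1 + τ) * β)) *
      ((lam * B * v2 - (n : ℝ) * η) / (r / 2 + s)) := by
    simp only [u1]
    rw [hx, hD, h1]
    generalize lam * B * v2 - (n : ℝ) * η = E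
    generalize r / 2 + s = p at *
    field_simp
  have h2 : v1 = ((lam * B * v2 - (n : ℝ) * η) / (r / 2 + s) *
      ((n : ℝ) * lam ^ 2 * v2 / ((1 + τ) * β)) + (lam * B * v2 - (n : ℝ) * η)) / r := by
    simp only [v1]
    rw [hD, hu1]
    ring
  rw [h2, hx, hE]
  generalize α * (1 + τ) * (r / 2 - s) - (n : ℝ) * η * lam = E
  have h3 : r / 2 - s = r - (r / 2 + s) := by ring
  rw [h3]
  generalize r / 2 + s = p at *
  field_simp
  ring
end

section
/- Let r > 0, λ > 0, ρ > 0, β > 0. For each positive integer n define u₂ʷ(n) = (n·r − √(n²r² + 4(2n−1)·λ²·n²·ρ/β)) / (2(2n−1)·λ²), x(n) = λ²·u₂ʷ(n) − r/2, and w₂(n) = (β/λ²)·(x(n) + √(x(n)² − λ²ρ/β)) (with the square root interpreted as Real.sqrt, which is 0 on negative inputs; the radicand is positive for all sufficiently large n). Then √n · w₂(n) converges, as n → ∞, to −√(ρβ/2)/λ. -/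
/-- Asymptotics of the non-cooperative quadratic value-function coefficient:
`√n · w₂(n) → −√(ρβ/2)/λ` as `n → ∞`, where
`w₂(n) = (β/λ²)(x(n) + √(x(n)² − λ²ρ/β))` and `x(n) = λ²u₂ʷ(n) − r/2`. -/
theorem stmt_17 (r lam ρ β : ℝ) (hr : 0 < r) (hlam : 0 < lam)
    (hρ : 0 < ρ) (hβ : 0 < β) :
    let u2w : ℕ → ℝ := fun n =>
      ((n : ℝ) * r -
        Real.sqrt ((n : ℝ) ^ 2 * r ^ 2 +
          4 * (2 * (n : ℝ) - 1) * lam ^ 2 * (n : ℝ) ^ 2 * ρ / β))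
      / (2 * (2 * (n : ℝ) - 1) * lam ^ 2)
    let x : ℕ → ℝ := fun n => lam ^ 2 * u2w n - r / 2
    let w2 : ℕ → ℝ := fun n =>
      (β / lam ^ 2) * (x n + Real.sqrt ((x n) ^ 2 - lam ^ 2 * ρ / β))
    Filter.Tendsto (fun n : ℕ => Real.sqrt (n : ℝ) * w2 n)
      Filter.atTop
      (nhds (-(Real.sqrt (ρ * β / 2) / lam))) := by
  intro u2w x w2
  set d : ℝ := lam ^ 2 * ρ / β with hd
  have hdpos : 0 < d := by positivity
  let s : ℕ → ℝ := fun n => 1 / Real.sqrt (n : ℝ)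
  have hs : Filter.Tendsto s Filter.atTop (nhds 0) := by
    have h1 : Filter.Tendsto (fun n : ℕ => Real.sqrt (n : ℝ)) Filter.atTop Filter.atTop :=
      Real.tendsto_sqrt_atTop.comp tendsto_natCast_atTop_atTop
    simp only [s, one_div]
    exact h1.inv_tendsto_atTop
  let F : ℝ → ℝ := fun a =>
    (r * a - Real.sqrt (r ^ 2 * a ^ 2 + 4 * (2 - a ^ 2) * d)) / (2 * (2 - a ^ 2)) - r * a / 2
  let y : ℕ → ℝ := fun n => F (s n)
  set L : ℝ := Real.sqrt (d / 2) with hL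
  have hLpos : 0 < L := Real.sqrt_pos.mpr (by positivity)
  have hLsq : L ^ 2 = d / 2 := Real.sq_sqrt (by positivity)
  have hF0 : F 0 = -L := by
    have : Real.sqrt (8 * d) = 4 * L := by
      rw [Real.sqrt_eq_iff_mul_self_eq (by positivity) (by positivity)]
      nlinarith
    have h2 : r ^ 2 * 0 ^ 2 + 4 * (2 - 0 ^ 2) * d = 8 * d := by ring
    simp only [F]
    rw [h2, this]
    ring
  have hFc : ContinuousAt F 0 := by
    have h : (2 * (2 - (0:ℝ) ^ 2)) ≠ 0 := by norm_num
    apply ContinuousAt.sub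
    · apply ContinuousAt.div
      · fun_prop
      · fun_prop
      · exact h
    · fun_prop
  have hy : Filter.Tendsto y Filter.atTop (nhds (-L)) := by
    rw [← hF0]; exact hFc.tendsto.comp hs
  have hR : Filter.Tendsto (fun n => y n ^ 2 - d * s n ^ 2) Filter.atTop (nhds (L ^ 2)) := by
    have := (hy.pow 2).sub ((hs.pow 2).const_mul d)
    simpa using this
  have hG : Filter.Tendsto
      (fun n => ρ / (y n - Real.sqrt (y n ^ 2 - d * s n ^ 2))) Filter.atTop
      (nhds (ρ / (-L - Real.sqrt (L ^ 2)))) := by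
    apply Filter.Tendsto.div tendsto_const_nhds (hy.sub hR.sqrt)
    rw [Real.sqrt_sq hLpos.le]; linarith
  have hlim : ρ / (-L - Real.sqrt (L ^ 2)) = -(Real.sqrt (ρ * β / 2) / lam) := by
    have h1 : Real.sqrt (ρ * β / 2) = ρ * lam / (2 * L) := by
      rw [Real.sqrt_eq_iff_mul_self_eq (by positivity) (by positivity)]
      have : ρ * lam / (2 * L) * (ρ * lam / (2 * L)) = ρ ^ 2 * lam ^ 2 / (4 * L ^ 2) := by
        field_simp; ring
      rw [this, hLsq, hd]
      field_simp
      try ring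
    rw [Real.sqrt_sq hLpos.le, h1]
    have : -L - L ≠ 0 := by linarith
    have e : -L - L = -(2 * L) := by ring
    rw [e]
    field_simp
  rw [← hlim]
  refine hG.congr' ?_
  filter_upwards [Filter.eventually_ge_atTop 1, hy.eventually (gt_mem_nhds (neg_lt_zero.mpr hLpos)),
    hR.eventually (lt_mem_nhds (by positivity : (0:ℝ) < L ^ 2))] with n hn hyn hRn
  have hn1 : (1:ℝ) ≤ n := by exact_mod_cast hn
  set q : ℝ := Real.sqrt (n : ℝ) with hq
  have hqpos : 0 < q := Real.sqrt_pos.mpr (by linarith)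
  have hqn : (n : ℝ) = q ^ 2 := (Real.sq_sqrt (by linarith)).symm
  have hq1 : 1 ≤ q ^ 2 := by rw [← hqn]; exact hn1
  have hsq : s n = 1 / q := rfl
  have hden : 0 < 2 * q ^ 2 - 1 := by linarith
  have hx : x n = q * y n := by
    have e1 : (n : ℝ) ^ 2 * r ^ 2 + 4 * (2 * (n : ℝ) - 1) * lam ^ 2 * (n : ℝ) ^ 2 * ρ / β
        = (q ^ 3) ^ 2 * (r ^ 2 * (1 / q) ^ 2 + 4 * (2 - (1 / q) ^ 2) * d) := by
      rw [hqn, hd]; field_simp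
    have e2 : (2 - (1 / q) ^ 2) = (2 * q ^ 2 - 1) / q ^ 2 := by field_simp
    simp only [x, u2w, y, F]
    rw [e1, Real.sqrt_mul (by positivity), Real.sqrt_sq (by positivity), hqn, hsq]
    generalize Real.sqrt (r ^ 2 * (1 / q) ^ 2 + 4 * (2 - (1 / q) ^ 2) * d) = S
    rw [e2]
    have := hden.ne'
    field_simp
  have hsq2 : Real.sqrt (x n ^ 2 - d) = q * Real.sqrt (y n ^ 2 - d * s n ^ 2) := by
    have : x n ^ 2 - d = q ^ 2 * (y n ^ 2 - d * s n ^ 2) := by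
      rw [hx, hsq]; field_simp
    rw [this, Real.sqrt_mul (by positivity), Real.sqrt_sq hqpos.le]
  simp only [w2]
  rw [hsq2, hx]
  have hS := Real.sq_sqrt hRn.le
  have hS0 := Real.sqrt_nonneg (y n ^ 2 - d * s n ^ 2)
  generalize Real.sqrt (y n ^ 2 - d * s n ^ 2) = S at hS hS0 ⊢
  have hne : y n - S ≠ 0 := by linarith
  rw [div_eq_iff hne]
  have : q * (β / lam ^ 2 * (q * y n + q * S)) * (y n - S)
      = q ^ 2 * (β / lam ^ 2) * (y n ^ 2 - S ^ 2) := by ring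
  rw [this, hS, hsq, hd]
  field_simp
  try ring
end
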